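/- arXiv:1305.0018 — 2 statements merged into one kernel-verified Lean document; each statement's English description precedes it below -/
import Mathlib

section
/- Let n ∈ ℕ, A an n×n real matrix, and v ∈ ℝⁿ, and let d_k (k ≥ 0) be the determinants of the path-extended matrices M_k. Then for every k ≥ 0 one has the closed form d_k = d_0 + k·(d_1 − d_0); in particular the sequence d_k is an arithmetic progression in k. -/
/-- The path-extended matrix `M_k`: the top-left `n × n` block is `A`; the first
appended index is coupled to the original indices by `v`; appended diagonal entries
are `2`; consecutive appended indices are coupled by `-1`; all other new entries
vanish.  For `k = 0` this is just `A` (reindexed along `Fin (n + 0)`). -/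
def pathExt (n : ℕ) (A : Matrix (Fin n) (Fin n) ℝ) (v : Fin n → ℝ) (k : ℕ) :
    Matrix (Fin (n + k)) (Fin (n + k)) ℝ :=
  Matrix.of fun i j =>
    if hi : (i : ℕ) < n then
      if hj : (j : ℕ) < n then A ⟨i, hi⟩ ⟨j, hj⟩
      else if (j : ℕ) = n then v ⟨i, hi⟩ else 0
    else
      if hj : (j : ℕ) < n then
        if (i : ℕ) = n then v ⟨j, hj⟩ else 0
      else
        if (i : ℕ) = (j : ℕ) then 2
        else if (i : ℕ) + 1 = (j : ℕ) ∨ (j : ℕ) + 1 = (i : ℕ) then -1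
        else 0

/-- The determinants `d_k = det M_k` of the path-extended matrices. -/
def pathDet (n : ℕ) (A : Matrix (Fin n) (Fin n) ℝ) (v : Fin n → ℝ) (k : ℕ) : ℝ :=
  (pathExt n A v k).det

theorem det_three_term {m : ℕ} (M : Matrix (Fin (m + 2)) (Fin (m + 2)) ℝ)
    (hr : ∀ j : Fin m, M (Fin.last (m + 1)) j.castSucc.castSucc = 0)
    (hc : ∀ i : Fin m, M i.castSucc.castSucc (Fin.last (m + 1)) = 0) :
    M.det = M (Fin.last (m + 1)) (Fin.last (m + 1)) *
        (M.submatrix Fin.castSucc Fin.castSucc).det -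
      M (Fin.last (m + 1)) (Fin.last m).castSucc * M (Fin.last m).castSucc (Fin.last (m + 1)) *
        (M.submatrix (fun i : Fin m => i.castSucc.castSucc)
          (fun i : Fin m => i.castSucc.castSucc)).det := by
  have hminor : (M.submatrix (Fin.last (m + 1)).succAbove (Fin.last m).castSucc.succAbove).det =
      M (Fin.last m).castSucc (Fin.last (m + 1)) *
        (M.submatrix (fun i : Fin m => i.castSucc.castSucc)
          (fun i : Fin m => i.castSucc.castSucc)).det := by
    rw [Matrix.det_succ_column _ (Fin.last m), Fin.sum_univ_castSucc]
    have hl : (Fin.last m).castSucc.succAbove (Fin.last m) = Fin.last (m + 1) := by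
      rw [Fin.succAbove_castSucc_self, Fin.succ_last]
    rw [Finset.sum_eq_zero, zero_add]
    · have e : ((-1 : ℝ)) ^ (((Fin.last m : Fin (m + 1)) : ℕ) + ((Fin.last m : Fin (m + 1)) : ℕ)) = 1 :=
        Even.neg_one_pow ⟨_, rfl⟩
      rw [e, one_mul, Matrix.submatrix_apply, hl, Matrix.submatrix_submatrix, Fin.succAbove_last,
        Fin.succAbove_last]
      congr 3
      funext j
      simp only [Function.comp]
      rw [Fin.succAbove_of_castSucc_lt]
      simp [Fin.lt_def]
    · intro i _
      rw [Matrix.submatrix_apply, hl, Fin.succAbove_last, hc]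
      simp
  rw [Matrix.det_succ_row _ (Fin.last (m + 1)), Fin.sum_univ_castSucc, Fin.sum_univ_castSucc,
    Finset.sum_eq_zero, hminor]
  · have e : ((-1 : ℝ)) ^ (m + 1 + (m + 1)) = 1 := Even.neg_one_pow ⟨_, rfl⟩
    have e' : ((-1 : ℝ)) ^ (m + 1 + m) = -1 := Odd.neg_one_pow ⟨m, by ring⟩
    simp only [Fin.val_last, Fin.val_castSucc, Fin.succAbove_last]
    rw [e, e']
    ring
  · intro j _
    rw [hr]
    simp

theorem pathDet_step (n : ℕ) (A : Matrix (Fin n) (Fin n) ℝ) (v : Fin n → ℝ) (k : ℕ) :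
    pathDet n A v (k + 2) = 2 * pathDet n A v (k + 1) - pathDet n A v k := by
  have h := det_three_term (m := n + k) (pathExt n A v (k + 2)) ?_ ?_
  · have h1 : pathExt n A v (k + 2) (Fin.last (n + k + 1)) (Fin.last (n + k + 1)) = 2 := by
      simp only [pathExt, Matrix.of_apply, Fin.val_last]
      rw [dif_neg (by omega), dif_neg (by omega), if_pos (by simp)]
    have h2 : pathExt n A v (k + 2) (Fin.last (n + k + 1)) (Fin.last (n + k)).castSucc = -1 := by
      simp only [pathExt, Matrix.of_apply, Fin.val_last, Fin.val_castSucc]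
      rw [dif_neg (by omega), dif_neg (by omega), if_neg (by omega), if_pos (by simp)]
    have h3 : pathExt n A v (k + 2) (Fin.last (n + k)).castSucc (Fin.last (n + k + 1)) = -1 := by
      simp only [pathExt, Matrix.of_apply, Fin.val_last, Fin.val_castSucc]
      rw [dif_neg (by omega), dif_neg (by omega), if_neg (by omega), if_pos (by simp)]
    rw [h1, h2, h3] at h
    have h4 : pathDet n A v (k + 2) = 2 * pathDet n A v (k + 1) - -1 * -1 * pathDet n A v k := h
    rw [h4]
    ring
  · intro j
    have := j.isLt
    simp only [pathExt, Matrix.of_apply, Fin.val_last, Fin.val_castSucc]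
    split_ifs <;> first | rfl | omega
  · intro j
    have := j.isLt
    simp only [pathExt, Matrix.of_apply, Fin.val_last, Fin.val_castSucc]
    split_ifs <;> first | rfl | omega

/-- the determinants of the path-extended matrices form an arithmetic
progression: `d_k = d_0 + k (d_1 - d_0)` for every `k ≥ 0`. -/
theorem pathDet_arithmetic (n : ℕ) (A : Matrix (Fin n) (Fin n) ℝ) (v : Fin n → ℝ) :
    ∀ k : ℕ, pathDet n A v k =
      pathDet n A v 0 + (k : ℝ) * (pathDet n A v 1 - pathDet n A v 0) := by
  intro k
  induction k using Nat.twoStepInduction with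
  | zero => simp
  | one => simp
  | more k h0 h1 =>
    rw [pathDet_step, h0, h1]
    push_cast
    ring
end

section
/- Let n ∈ ℕ, A an n×n real matrix, v ∈ ℝⁿ, d_k the determinants of the path-extended matrices M_k, and B_0 the bordered matrix with corner entry 0. Then for every integer D ≥ 3 one has the identity d_{D−2} = (D−1)·det A + (D−2)·det B_0. -/
/-- The bordered matrix `B_a`: top-left `n × n` block is `A`, the last row and
column off the corner are given by `v`, and the bottom-right corner entry is `a`.
`B_0` is the Cartan matrix of the Borcherds–Kac–Moody superalgebra. -/
def bordered (n : ℕ) (A : Matrix (Fin n) (Fin n) ℝ) (v : Fin n → ℝ) (a : ℝ) :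
    Matrix (Fin (n + 1)) (Fin (n + 1)) ℝ :=
  Matrix.of fun i j =>
    if hi : (i : ℕ) < n then
      if hj : (j : ℕ) < n then A ⟨i, hi⟩ ⟨j, hj⟩ else v ⟨i, hi⟩
    else
      if hj : (j : ℕ) < n then v ⟨j, hj⟩ else a

theorem tri_rec (m : ℕ) (N : Matrix (Fin (m+2)) (Fin (m+2)) ℝ)
    (hr : ∀ j : Fin m, N (Fin.last (m+1)) j.castSucc.castSucc = 0)
    (hc : ∀ j : Fin m, N j.castSucc.castSucc (Fin.last (m+1)) = 0)
    (h1 : N (Fin.last (m+1)) (Fin.last m).castSucc = -1)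
    (h2 : N (Fin.last m).castSucc (Fin.last (m+1)) = -1)
    (h3 : N (Fin.last (m+1)) (Fin.last (m+1)) = 2) :
    N.det = 2 * (N.submatrix Fin.castSucc Fin.castSucc).det
      - (N.submatrix (fun i : Fin m => i.castSucc.castSucc) (fun i : Fin m => i.castSucc.castSucc)).det := by
  have key : (N.submatrix Fin.castSucc ((Fin.last m).castSucc.succAbove)).det =
      - (N.submatrix (fun i : Fin m => i.castSucc.castSucc) (fun i : Fin m => i.castSucc.castSucc)).det := by
    have e : (Fin.last m).castSucc.succAbove (Fin.last m) = Fin.last (m+1) := by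
      simp
    rw [Matrix.det_succ_column _ (Fin.last m), Fin.sum_univ_castSucc]
    simp only [Matrix.submatrix_apply, e, hc, h2, Matrix.submatrix_submatrix]
    have e2 : ((Fin.last m).castSucc.succAbove ∘ (Fin.last m).succAbove) =
        (fun i : Fin m => i.castSucc.castSucc) := by
      funext i
      simp [Fin.succAbove, Fin.lt_def]
    have e3 : (Fin.castSucc ∘ (Fin.last m).succAbove) =
        (fun i : Fin m => i.castSucc.castSucc) := by
      funext i
      simp
    rw [e2, e3]
    simp [← two_mul]
  rw [Matrix.det_succ_row _ (Fin.last (m+1)), Fin.sum_univ_castSucc, Fin.sum_univ_castSucc]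
  simp only [hr, h1, h3, Fin.succAbove_last, key]
  have p : (-1:ℝ)^(m+1+m) = -1 := Odd.neg_one_pow ⟨m, by ring⟩
  have q : (-1:ℝ)^(m+1+(m+1)) = 1 := Even.neg_one_pow ⟨m+1, by ring⟩
  simp [p, q]
  ring

theorem pathDet_rec (n : ℕ) (A : Matrix (Fin n) (Fin n) ℝ) (v : Fin n → ℝ) (k : ℕ) :
    pathDet n A v (k+2) = 2 * pathDet n A v (k+1) - pathDet n A v k := by
  have := tri_rec (n+k) (pathExt n A v (k+2))
    (by intro j; have := j.2; simp [pathExt]; grind)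
    (by intro j; have := j.2; simp [pathExt]; grind)
    (by simp [pathExt]; try grind)
    (by simp [pathExt]; try grind)
    (by simp [pathExt]; try grind)
  exact this

theorem pathDet_zero (n : ℕ) (A : Matrix (Fin n) (Fin n) ℝ) (v : Fin n → ℝ) :
    pathDet n A v 0 = A.det := by
  unfold pathDet
  congr 1
  ext i j
  have := i.2
  have := j.2
  simp [pathExt]

theorem pathDet_one (n : ℕ) (A : Matrix (Fin n) (Fin n) ℝ) (v : Fin n → ℝ) :
    pathDet n A v 1 = 2 * A.det + (bordered n A v 0).det := by
  unfold pathDet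
  rw [Matrix.det_succ_row (bordered n A v 0) (Fin.last n), Fin.sum_univ_castSucc,
    Matrix.det_succ_row (pathExt n A v 1) (Fin.last n), Fin.sum_univ_castSucc]
  have a : ∀ i : Fin n, ∀ j : Fin (n+1), pathExt n A v 1 i.castSucc j = bordered n A v 0 i.castSucc j := by
    intro i j
    have := j.2
    simp [pathExt, bordered]
    grind
  have b : ∀ j : Fin n, pathExt n A v 1 (Fin.last n) j.castSucc = bordered n A v 0 (Fin.last n) j.castSucc := by
    intro j
    simp [pathExt, bordered]
  have c : ∀ f : Fin n → Fin (n+1), (pathExt n A v 1).submatrix Fin.castSucc f = (bordered n A v 0).submatrix Fin.castSucc f := by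
    intro f
    ext i j
    exact a i (f j)
  have d : (bordered n A v 0).submatrix Fin.castSucc Fin.castSucc = A := by
    ext i j
    simp [bordered]
  have e : pathExt n A v 1 (Fin.last n) (Fin.last n) = 2 := by simp [pathExt]
  have f : bordered n A v 0 (Fin.last n) (Fin.last n) = 0 := by simp [bordered]
  simp only [Fin.succAbove_last, b, c, d, e, f]
  simp [← two_mul]
  ring

theorem pathDet_formula (n : ℕ) (A : Matrix (Fin n) (Fin n) ℝ) (v : Fin n → ℝ) (k : ℕ) :
    pathDet n A v k = ((k:ℝ)+1) * A.det + k * (bordered n A v 0).det ∧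
    pathDet n A v (k+1) = ((k:ℝ)+2) * A.det + (k+1) * (bordered n A v 0).det := by
  induction k with
  | zero => simp [pathDet_zero, pathDet_one]
  | succ k ih =>
    obtain ⟨h1, h2⟩ := ih
    constructor
    · rw [h2]; push_cast; ring
    · rw [pathDet_rec, h1, h2]; push_cast; ring

/-- for every integer `D ≥ 3` one has
`d_{D-2} = (D-1) · det A + (D-2) · det B_0`. -/
theorem pathDet_eq_detA_detB (n : ℕ) (A : Matrix (Fin n) (Fin n) ℝ) (v : Fin n → ℝ) :
    ∀ D : ℕ, 3 ≤ D →
      pathDet n A v (D - 2) =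
        ((D : ℝ) - 1) * A.det + ((D : ℝ) - 2) * (bordered n A v 0).det := by
  intro D hD
  obtain ⟨k, rfl⟩ := Nat.exists_eq_add_of_le' (show 2 ≤ D by omega)
  rw [Nat.add_sub_cancel, (pathDet_formula n A v k).1]
  push_cast
  ring
end
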